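/- arXiv:2308.14304 — 3 statements merged into one kernel-verified Lean document; each statement's English description precedes it below -/
import Mathlib

section
/- Let A ∈ ℝ^{n×n} be a positive semidefinite matrix, let r > 0 and ε ∈ (0, 0.1), and let B ∈ ℝ^{n×n} be a symmetric matrix satisfying: (1) ε ≤ (1/4)·exp(−4r); (2) A_{i,j} ∈ [exp(−r), exp(r)] for all i, j ∈ [n]; (3) (1−ε)·A ⪯ B ⪯ (1+ε)·A in the Loewner order. Then every entry of B satisfies B_{i,j} ∈ [(1−√ε)·exp(−r), (1+ε)·exp(r)]. -/
open Matrix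
open scoped BigOperators

/-- The Euclidean (`ℓ₂`) norm of a vector in `ℝ^n`. -/
noncomputable def vnorm {n : ℕ} (v : Fin n → ℝ) : ℝ :=
  Real.sqrt (∑ i, v i ^ 2)

/-- The minimum singular value `σ_min(A) = min_{‖x‖₂ = 1} ‖Ax‖₂`. -/
noncomputable def sigmaMin {n d : ℕ} (A : Matrix (Fin n) (Fin d) ℝ) : ℝ :=
  sInf {c : ℝ | ∃ x : Fin d → ℝ, vnorm x = 1 ∧ c = vnorm (A.mulVec x)}

/-- The maximum singular value (spectral / operator norm)
`σ_max(A) = ‖A‖ = max_{‖x‖₂ = 1} ‖Ax‖₂`. -/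
noncomputable def sigmaMax {n d : ℕ} (A : Matrix (Fin n) (Fin d) ℝ) : ℝ :=
  sSup {c : ℝ | ∃ x : Fin d → ℝ, vnorm x = 1 ∧ c = vnorm (A.mulVec x)}

/-- The condition number `κ(A) = σ_max(A) / σ_min(A)`. -/
noncomputable def kappa {n d : ℕ} (A : Matrix (Fin n) (Fin d) ℝ) : ℝ :=
  sigmaMax A / sigmaMin A

theorem psd_entry_aux {n : ℕ} (M : Matrix (Fin n) (Fin n) ℝ) (hM : M.PosSemidef)
    (i j : Fin n) (c : ℝ) (hc : c ^ 2 = 1) : 0 ≤ M i i + M j j + 2 * c * M i j := by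
  have h := hM.dotProduct_mulVec_nonneg (Pi.single i 1 + Pi.single j c)
  have hs : M j i = M i j := by simpa using hM.1.apply i j
  simp [Matrix.mulVec_add, add_dotProduct, dotProduct_add, Matrix.mulVec_single, hs] at h
  have e : c * (c * M j j) = M j j := by rw [← mul_assoc, ← sq, hc, one_mul]
  linarith [mul_add c (M i j) (c * M j j)]

/-- Entrywise bounds on a spectral approximation of the attention kernel
matrix.  If `A` is PSD with entries in `[exp(-r), exp(r)]`, `ε ∈ (0, 0.1)` with
`ε ≤ (1/4)·exp(-4r)`, and `B` is symmetric with `(1-ε)·A ⪯ B ⪯ (1+ε)·A` in the Loewner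
order, then every entry of `B` lies in `[(1-√ε)·exp(-r), (1+ε)·exp(r)]`. -/
theorem entrywise_bounds_of_spectral_approx {n : ℕ}
    (A B : Matrix (Fin n) (Fin n) ℝ) (r ε : ℝ)
    (hr : 0 < r) (hε : ε ∈ Set.Ioo (0 : ℝ) 0.1)
    (hA : A.PosSemidef) (hBsymm : B.IsSymm)
    (hcond1 : ε ≤ (1 / 4) * Real.exp (-4 * r))
    (hcond2 : ∀ i j : Fin n, A i j ∈ Set.Icc (Real.exp (-r)) (Real.exp r))
    (hcond3lower : (B - (1 - ε) • A).PosSemidef)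
    (hcond3upper : ((1 + ε) • A - B).PosSemidef) :
    ∀ i j : Fin n,
      B i j ∈ Set.Icc ((1 - Real.sqrt ε) * Real.exp (-r)) ((1 + ε) * Real.exp r) := by
  intro i j
  obtain ⟨h0, h1⟩ := hε
  have p1 := psd_entry_aux _ hcond3lower i j 1 (by norm_num)
  have p2 := psd_entry_aux _ hcond3lower i j (-1) (by norm_num)
  have q1 := psd_entry_aux _ hcond3upper i j 1 (by norm_num)
  have q2 := psd_entry_aux _ hcond3upper i j (-1) (by norm_num)
  simp only [Matrix.sub_apply, Matrix.smul_apply, smul_eq_mul] at p1 p2 q1 q2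
  obtain ⟨a1, a2⟩ := hcond2 i j
  have b1 := mul_le_mul_of_nonneg_left (hcond2 i i).2 h0.le
  have b2 := mul_le_mul_of_nonneg_left (hcond2 j j).2 h0.le
  have hsq : Real.sqrt ε ≤ Real.exp (-r) * Real.exp (-r) := by
    apply Real.sqrt_le_iff.2
    refine ⟨by positivity, ?_⟩
    have : (Real.exp (-r) * Real.exp (-r)) ^ 2 = Real.exp (-4 * r) := by
      rw [← Real.exp_add, ← Real.exp_nat_mul]; congr 1; push_cast; ring
    rw [this]
    linarith [Real.exp_pos (-4 * r)]
  have hee : Real.exp (-r) * Real.exp r = 1 := by rw [← Real.exp_add]; simp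
  have key : ε * Real.exp r ≤ Real.sqrt ε * Real.exp (-r) := by
    calc ε * Real.exp r = Real.sqrt ε * (Real.sqrt ε * Real.exp r) := by
          rw [← mul_assoc, Real.mul_self_sqrt h0.le]
      _ ≤ Real.sqrt ε * (Real.exp (-r) * Real.exp (-r) * Real.exp r) := by gcongr
      _ = Real.sqrt ε * Real.exp (-r) := by rw [mul_assoc (Real.exp (-r)), hee, mul_one]
  constructor <;> linarith
end

section
/- Let A ∈ ℝ^{n×d} have full column rank with condition number κ(A) = σ_max(A)/σ_min(A), let k ≥ 1 be an integer, and let b₀, b_k, b_{k+1} ∈ ℝ^d and ε_k, ε_{k+1} > 0 satisfy: (1) ‖(AᵀA)^k b_k − b₀‖₂ ≤ ε_k ‖b₀‖₂; (2) ‖b_k‖₂ ≤ 2 σ_min(A)^{-2k} ‖b₀‖₂; (3) ε_k ≤ 0.5 ε_{k+1}; (4) ‖AᵀA b_{k+1} − b_k‖₂ ≤ 0.1 ε_{k+1} κ(A)^{-2k} ‖b_k‖₂. Then ‖(AᵀA)^{k+1} b_{k+1} − b₀‖₂ ≤ ε_{k+1} ‖b₀‖₂. -/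
open Matrix
open scoped BigOperators

theorem vnorm_eq_norm {n : ℕ} (v : Fin n → ℝ) : vnorm v = ‖(WithLp.toLp 2 v : EuclideanSpace ℝ (Fin n))‖ := by
  simp [vnorm, EuclideanSpace.norm_eq]

open scoped Matrix.Norms.L2Operator in
theorem vnorm_mulVec_le_norm {n d : ℕ} (A : Matrix (Fin n) (Fin d) ℝ) (x : Fin d → ℝ) :
    vnorm (A.mulVec x) ≤ ‖A‖ * vnorm x := by
  rw [vnorm_eq_norm, vnorm_eq_norm]
  exact Matrix.l2_opNorm_mulVec A (WithLp.toLp 2 x)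

theorem vnorm_nonneg' {n : ℕ} (v : Fin n → ℝ) : 0 ≤ vnorm v := Real.sqrt_nonneg _

theorem vnorm_smul' {n : ℕ} (c : ℝ) (v : Fin n → ℝ) : vnorm (c • v) = |c| * vnorm v := by
  rw [vnorm_eq_norm, vnorm_eq_norm, WithLp.toLp_smul, norm_smul, Real.norm_eq_abs]

theorem vnorm_add_le' {n : ℕ} (v w : Fin n → ℝ) : vnorm (v + w) ≤ vnorm v + vnorm w := by
  simp only [vnorm_eq_norm, WithLp.toLp_add]
  exact norm_add_le _ _

theorem sigmaMax_nonneg' {n d : ℕ} (A : Matrix (Fin n) (Fin d) ℝ) : 0 ≤ sigmaMax A := by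
  apply Real.sSup_nonneg
  rintro c ⟨x, -, rfl⟩
  exact vnorm_nonneg' _

open scoped Matrix.Norms.L2Operator in
theorem vnorm_mulVec_le {n d : ℕ} (A : Matrix (Fin n) (Fin d) ℝ) (x : Fin d → ℝ) :
    vnorm (A.mulVec x) ≤ sigmaMax A * vnorm x := by
  rcases (vnorm_nonneg' x).eq_or_lt with h | h
  · have := vnorm_mulVec_le_norm A x
    rw [← h] at this ⊢
    simpa using this
  · have hb : BddAbove {c : ℝ | ∃ x : Fin d → ℝ, vnorm x = 1 ∧ c = vnorm (A.mulVec x)} := by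
      refine ⟨‖A‖, ?_⟩
      rintro c ⟨y, hy, rfl⟩
      simpa [hy] using vnorm_mulVec_le_norm A y
    have h1 : vnorm (A.mulVec ((vnorm x)⁻¹ • x)) ≤ sigmaMax A := by
      apply le_csSup hb
      refine ⟨_, ?_, rfl⟩
      rw [vnorm_smul', abs_of_pos (inv_pos.2 h), inv_mul_cancel₀ h.ne']
    rw [Matrix.mulVec_smul, vnorm_smul', abs_of_pos (inv_pos.2 h), inv_mul_le_iff₀ h] at h1
    linarith

open scoped Matrix.Norms.L2Operator in
theorem norm_le_sigmaMax {n d : ℕ} (A : Matrix (Fin n) (Fin d) ℝ) : ‖A‖ ≤ sigmaMax A := by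
  rw [Matrix.l2_opNorm_def]
  refine ContinuousLinearMap.opNorm_le_bound _ (sigmaMax_nonneg' A) fun x => ?_
  have := vnorm_mulVec_le A x.ofLp
  rw [vnorm_eq_norm, vnorm_eq_norm] at this
  exact this

open scoped Matrix.Norms.L2Operator in
theorem vnorm_gram_le {n d : ℕ} (A : Matrix (Fin n) (Fin d) ℝ) (x : Fin d → ℝ) :
    vnorm ((Aᵀ * A).mulVec x) ≤ sigmaMax A ^ 2 * vnorm x := by
  refine (vnorm_mulVec_le_norm _ x).trans (mul_le_mul_of_nonneg_right ?_ (vnorm_nonneg' x))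
  have h := Matrix.l2_opNorm_conjTranspose_mul_self A
  rw [Matrix.conjTranspose_eq_transpose_of_trivial] at h
  rw [h, ← pow_two]
  exact pow_le_pow_left₀ (norm_nonneg _) (norm_le_sigmaMax A) 2

theorem vnorm_gram_pow_le {n d : ℕ} (A : Matrix (Fin n) (Fin d) ℝ) (k : ℕ) (x : Fin d → ℝ) :
    vnorm (((Aᵀ * A) ^ k).mulVec x) ≤ sigmaMax A ^ (2 * k) * vnorm x := by
  induction k with
  | zero => simp
  | succ k ih =>
    rw [pow_succ', ← Matrix.mulVec_mulVec]
    refine (vnorm_gram_le A _).trans ?_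
    calc _ ≤ sigmaMax A ^ 2 * (sigmaMax A ^ (2 * k) * vnorm x) := by gcongr
      _ = _ := by ring

/-- Error-propagation step of the induction for even power regression:
given the inductive error bounds at step `k` and an approximate PSD regression solve
producing `b_{k+1}`, the error bound at step `k+1` holds. -/
theorem even_power_induction_error {n d : ℕ} (A : Matrix (Fin n) (Fin d) ℝ)
    (hrank : A.rank = d) (k : ℕ) (hk : 1 ≤ k)
    (b0 bk bk1 : Fin d → ℝ) (εk εk1 : ℝ) (hεk : 0 < εk) (hεk1 : 0 < εk1)
    (h1 : vnorm (((Aᵀ * A) ^ k).mulVec bk - b0) ≤ εk * vnorm b0)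
    (h2 : vnorm bk ≤ 2 * ((sigmaMin A) ^ (2 * k))⁻¹ * vnorm b0)
    (h3 : εk ≤ 0.5 * εk1)
    (h4 : vnorm ((Aᵀ * A).mulVec bk1 - bk)
        ≤ 0.1 * εk1 * ((kappa A) ^ (2 * k))⁻¹ * vnorm bk) :
    vnorm (((Aᵀ * A) ^ (k + 1)).mulVec bk1 - b0) ≤ εk1 * vnorm b0 := by
  have hS := sigmaMax_nonneg' A
  have hdec : ((Aᵀ * A) ^ (k + 1)).mulVec bk1 - b0
      = ((Aᵀ * A) ^ k).mulVec ((Aᵀ * A).mulVec bk1 - bk) + (((Aᵀ * A) ^ k).mulVec bk - b0) := by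
    rw [Matrix.mulVec_sub, Matrix.mulVec_mulVec, ← pow_succ]
    abel
  have hb := vnorm_nonneg' b0
  set S := sigmaMax A ^ (2 * k) with hSd
  set m := sigmaMin A ^ (2 * k) with hm
  have hS0 : 0 ≤ S := pow_nonneg hS _
  have hm0 : 0 ≤ m := by rw [hm, pow_mul]; positivity
  have hκ : ((kappa A) ^ (2 * k))⁻¹ = m * S⁻¹ := by
    rw [kappa, div_pow, inv_div, div_eq_mul_inv]
  rw [hκ] at h4
  have hSS : S * S⁻¹ ≤ 1 := mul_inv_le_one
  have hmm : m * m⁻¹ ≤ 1 := mul_inv_le_one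
  have hprod : (S * S⁻¹) * (m * m⁻¹) ≤ 1 := mul_le_one₀ hSS (by positivity) hmm
  have e1 : vnorm (((Aᵀ * A) ^ k).mulVec ((Aᵀ * A).mulVec bk1 - bk)) ≤ 0.2 * εk1 * vnorm b0 := by
    calc _ ≤ S * vnorm ((Aᵀ * A).mulVec bk1 - bk) := vnorm_gram_pow_le A k _
      _ ≤ S * (0.1 * εk1 * (m * S⁻¹) * (2 * m⁻¹ * vnorm b0)) := by
        gcongr
        refine h4.trans ?_
        gcongr
      _ = (0.2 * εk1 * vnorm b0) * ((S * S⁻¹) * (m * m⁻¹)) := by ring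
      _ ≤ (0.2 * εk1 * vnorm b0) * 1 := by gcongr
      _ = _ := mul_one _
  have e2 : εk * vnorm b0 ≤ 0.5 * εk1 * vnorm b0 := by gcongr
  have e3 : 0 ≤ εk1 * vnorm b0 := by positivity
  rw [hdec]
  refine (vnorm_add_le' _ _).trans ?_
  linarith
end

section
/- Let M ∈ ℝ^{n×d} be a matrix all of whose singular values lie in the interval [1−ε, 1+ε] for some ε ∈ (0, 0.1], let b ∈ ℝⁿ, and let z* satisfy the normal equations MᵀMz* = Mᵀb. Consider the iteration z_{t+1} = z_t − Mᵀ(Mz_t − b). Then for every t, ‖M(z_{t+1} − z*)‖₂ ≤ 3ε · ‖M(z_t − z*)‖₂. -/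
open Matrix
open scoped BigOperators

lemma vnorm_eq_dot {n : ℕ} (v : Fin n → ℝ) : vnorm v = Real.sqrt (v ⬝ᵥ v) := by
  simp [vnorm, dotProduct, sq]

lemma dot_self_nn {n : ℕ} (v : Fin n → ℝ) : 0 ≤ v ⬝ᵥ v := by
  unfold dotProduct
  exact Finset.sum_nonneg fun i _ => mul_self_nonneg _

lemma near_iso_bounds {n d : ℕ} (M : Matrix (Fin n) (Fin d) ℝ) (ε : ℝ) (h1 : ε ≤ 1) (h0 : 0 ≤ ε)
    (hM : ∀ x : Fin d → ℝ, vnorm x = 1 →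
      1 - ε ≤ vnorm (M.mulVec x) ∧ vnorm (M.mulVec x) ≤ 1 + ε) (x : Fin d → ℝ) :
    (1 - ε) ^ 2 * (x ⬝ᵥ x) ≤ (M *ᵥ x) ⬝ᵥ (M *ᵥ x) ∧
      (M *ᵥ x) ⬝ᵥ (M *ᵥ x) ≤ (1 + ε) ^ 2 * (x ⬝ᵥ x) := by
  by_cases hx : x = 0
  · subst hx; simp
  have hpos : 0 < x ⬝ᵥ x :=
    lt_of_le_of_ne (dot_self_nn x) fun h => hx (dotProduct_self_eq_zero.mp h.symm)
  set r := Real.sqrt (x ⬝ᵥ x) with hr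
  have hrp : 0 < r := Real.sqrt_pos.mpr hpos
  have hrr : r ^ 2 = x ⬝ᵥ x := Real.sq_sqrt hpos.le
  have hu : vnorm (r⁻¹ • x) = 1 := by
    rw [vnorm_eq_dot, smul_dotProduct, dotProduct_smul, ← hrr, Real.sqrt_eq_one]
    simp only [smul_eq_mul]
    field_simp
  obtain ⟨ha, hb⟩ := hM _ hu
  rw [vnorm_eq_dot] at ha hb
  have hs := Real.sq_sqrt (dot_self_nn (M *ᵥ (r⁻¹ • x)))
  have hn := Real.sqrt_nonneg ((M *ᵥ (r⁻¹ • x)) ⬝ᵥ (M *ᵥ (r⁻¹ • x)))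
  set q := Real.sqrt ((M *ᵥ (r⁻¹ • x)) ⬝ᵥ (M *ᵥ (r⁻¹ • x)))
  rw [mulVec_smul, smul_dotProduct, dotProduct_smul] at hs
  simp only [smul_eq_mul] at hs
  have e : (M *ᵥ x) ⬝ᵥ (M *ᵥ x) = q ^ 2 * r ^ 2 := by
    rw [hs]; field_simp
  rw [e, ← hrr]
  constructor
  · exact mul_le_mul_of_nonneg_right (pow_le_pow_left₀ (by linarith) ha 2) (sq_nonneg r)
  · exact mul_le_mul_of_nonneg_right (pow_le_pow_left₀ hn hb 2) (sq_nonneg r)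

/-- Gradient descent with a nearly-isometric matrix: if every singular
value of `M` lies in `[1-ε, 1+ε]` with `ε ∈ (0, 0.1]` (equivalently
`1-ε ≤ ‖Mx‖₂ ≤ 1+ε` for all unit vectors `x`), `z*` satisfies the normal equations, and
`z_{t+1} = z_t - Mᵀ(Mz_t - b)`, then the error contracts by a factor `3ε` each step. -/
theorem gradient_descent_near_isometry {n d : ℕ} (M : Matrix (Fin n) (Fin d) ℝ)
    (ε : ℝ) (hε : ε ∈ Set.Ioc (0 : ℝ) 0.1)
    (hM : ∀ x : Fin d → ℝ, vnorm x = 1 →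
      1 - ε ≤ vnorm (M.mulVec x) ∧ vnorm (M.mulVec x) ≤ 1 + ε)
    (b : Fin n → ℝ) (zstar : Fin d → ℝ)
    (hstar : (Mᵀ * M).mulVec zstar = Mᵀ.mulVec b)
    (zseq : ℕ → Fin d → ℝ)
    (hiter : ∀ t : ℕ, zseq (t + 1) = zseq t - Mᵀ.mulVec (M.mulVec (zseq t) - b)) :
    ∀ t : ℕ, vnorm (M.mulVec (zseq (t + 1) - zstar))
      ≤ 3 * ε * vnorm (M.mulVec (zseq t - zstar)) := by
  intro t
  obtain ⟨h0, h1⟩ := hε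
  norm_num at h1
  have hB := near_iso_bounds M ε (by linarith) h0.le hM
  set u := zseq t - zstar with hu
  obtain ⟨g, hg⟩ : ∃ g, g = Mᵀ *ᵥ (M *ᵥ u) - u := ⟨_, rfl⟩
  have hnext : zseq (t + 1) - zstar = -g := by
    rw [hiter, hg, hu, mulVec_sub, mulVec_sub, mulVec_sub, ← hstar, ← mulVec_mulVec]
    abel
  rw [hnext, mulVec_neg, vnorm_eq_dot, vnorm_eq_dot, neg_dotProduct_neg]
  have hgg : g ⬝ᵥ g = (M *ᵥ g) ⬝ᵥ (M *ᵥ u) - g ⬝ᵥ u := by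
    conv_lhs => rw [hg]
    rw [← hg, dotProduct_comm, hg, sub_dotProduct, ← hg, dotProduct_comm u g,
      dotProduct_comm _ g, dotProduct_mulVec, vecMul_transpose]
  obtain ⟨δ, hδ⟩ : ∃ δ, δ = 2 * ε + ε ^ 2 := ⟨_, rfl⟩
  have hδ0 : 0 < δ := by rw [hδ]; positivity
  have p1 := (hB (g + δ • u)).2
  have p2 := (hB (g - δ • u)).1
  have nn := dot_self_nn (g - δ • u)
  simp only [mulVec_add, mulVec_sub, mulVec_smul, add_dotProduct, dotProduct_add, sub_dotProduct,
    dotProduct_sub, smul_dotProduct, dotProduct_smul, smul_eq_mul, dotProduct_comm u g,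
    dotProduct_comm (M *ᵥ u) (M *ᵥ g)] at p1 p2 nn
  have hgu := (hB u).1
  have hMg := (hB g).2
  have ng := dot_self_nn g
  have nu := dot_self_nn u
  have nMu := dot_self_nn (M *ᵥ u)
  generalize (M *ᵥ g) ⬝ᵥ (M *ᵥ g) = Mgg at *
  generalize (M *ᵥ g) ⬝ᵥ (M *ᵥ u) = Mgu at *
  generalize (M *ᵥ u) ⬝ᵥ (M *ᵥ u) = Muu at *
  generalize g ⬝ᵥ g = gg at *
  generalize g ⬝ᵥ u = gu at *
  generalize u ⬝ᵥ u = uu at *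
  have e1 : (1 + ε) ^ 2 = 1 + δ := by rw [hδ]; ring
  have e2 : (1 - ε) ^ 2 = 1 - δ + 2 * ε ^ 2 := by rw [hδ]; ring
  rw [e1] at p1
  rw [e2] at p2
  have p3 := mul_nonneg (sq_nonneg ε) nn
  have key : gg ≤ δ ^ 2 * uu := by
    have : δ * gg ≤ δ * (δ ^ 2 * uu) := by
      subst hgg
      nlinarith
    exact le_of_mul_le_mul_left this hδ0
  have hfin : Mgg ≤ (3 * ε) ^ 2 * Muu := by
    have a1 : (1 + ε) * δ ≤ 3 * ε * (1 - ε) := by rw [hδ]; nlinarith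
    have a2 : ((1 + ε) * δ) ^ 2 ≤ (3 * ε * (1 - ε)) ^ 2 :=
      pow_le_pow_left₀ (by positivity) a1 2
    calc Mgg ≤ (1 + ε) ^ 2 * gg := hMg
      _ ≤ (1 + ε) ^ 2 * (δ ^ 2 * uu) := by gcongr
      _ = ((1 + ε) * δ) ^ 2 * uu := by ring
      _ ≤ (3 * ε * (1 - ε)) ^ 2 * uu := by gcongr
      _ = (3 * ε) ^ 2 * ((1 - ε) ^ 2 * uu) := by ring
      _ ≤ _ := by gcongr
  calc Real.sqrt Mgg ≤ Real.sqrt ((3 * ε) ^ 2 * Muu) := Real.sqrt_le_sqrt hfin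
    _ = 3 * ε * Real.sqrt Muu := by
      rw [Real.sqrt_mul (sq_nonneg _), Real.sqrt_sq (by positivity)]
end
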